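/- First Jacobi operator on the test pair built from σ and φ (Lemma 4.1(a), flat torus case): let (u, A) be a smooth solution of the YMH equations on U and let X = (X₁, X₂) ∈ ℝ² be a constant vector field (a Killing field of the flat torus). Then, with v = (X₁ − iX₂)·σ₊ and a = (F − h)·(−X₂, X₁), one has pointwise on U: J¹(v, a) = −2F·(X₁·D₁u + X₂·D₂u) + 2h·i·(X₂·D₁u − X₁·D₂u). -/

import Mathlib

open MeasureTheory Complex

noncomputable section

/-- Partial derivative in the first coordinate direction. -/
def pd1 {E : Type*} [NormedAddCommGroup E] [NormedSpace ℝ E] (f : ℝ × ℝ → E) (x : ℝ × ℝ) : E :=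
  fderiv ℝ f x (1, 0)

/-- Partial derivative in the second coordinate direction. -/
def pd2 {E : Type*} [NormedAddCommGroup E] [NormedSpace ℝ E] (f : ℝ × ℝ → E) (x : ℝ × ℝ) : E :=
  fderiv ℝ f x (0, 1)

/-- First covariant derivative `D₁f = ∂₁f − iA₁f`. -/
def D1 (A1 : ℝ × ℝ → ℝ) (f : ℝ × ℝ → ℂ) (x : ℝ × ℝ) : ℂ :=
  pd1 f x - Complex.I * (A1 x) * f x

/-- Second covariant derivative `D₂f = ∂₂f − iA₂f`. -/
def D2 (A2 : ℝ × ℝ → ℝ) (f : ℝ × ℝ → ℂ) (x : ℝ × ℝ) : ℂ :=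
  pd2 f x - Complex.I * (A2 x) * f x

/-- Curvature function `F = ∂₁A₂ − ∂₂A₁`. -/
def curv (A1 A2 : ℝ × ℝ → ℝ) (x : ℝ × ℝ) : ℝ := pd1 A2 x - pd2 A1 x

/-- `h = (1 − |u|²)/(2ε²)`. -/
def hfun (ε : ℝ) (u : ℝ × ℝ → ℂ) (x : ℝ × ℝ) : ℝ := (1 - ‖u x‖ ^ 2) / (2 * ε ^ 2)

/-- `σ₊ = D₁u + iD₂u`. -/
def sigP (u : ℝ × ℝ → ℂ) (A1 A2 : ℝ × ℝ → ℝ) (x : ℝ × ℝ) : ℂ :=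
  D1 A1 u x + Complex.I * D2 A2 u x

/-- `σ₋ = D₁u − iD₂u`. -/
def sigM (u : ℝ × ℝ → ℂ) (A1 A2 : ℝ × ℝ → ℝ) (x : ℝ × ℝ) : ℂ :=
  D1 A1 u x - Complex.I * D2 A2 u x

/-- The Yang--Mills--Higgs energy over the fundamental domain `[0,1]²`. -/
def energy (ε : ℝ) (u : ℝ × ℝ → ℂ) (A1 A2 : ℝ × ℝ → ℝ) : ℝ :=
  ∫ x in Set.Icc (0:ℝ) 1 ×ˢ Set.Icc (0:ℝ) 1,
    (ε ^ 2 * curv A1 A2 x ^ 2 + ‖D1 A1 u x‖ ^ 2 + ‖D2 A2 u x‖ ^ 2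
      + (1 - ‖u x‖ ^ 2) ^ 2 / (4 * ε ^ 2))

/-- `ℤ²`-periodicity. -/
def Periodic2 {E : Type*} (f : ℝ × ℝ → E) : Prop :=
  ∀ x : ℝ × ℝ, f (x.1 + 1, x.2) = f x ∧ f (x.1, x.2 + 1) = f x

/-- The Yang--Mills--Higgs equations on all of `ℝ²`. -/
def IsYMH (ε : ℝ) (u : ℝ × ℝ → ℂ) (A1 A2 : ℝ × ℝ → ℝ) : Prop :=
  (∀ x, -(D1 A1 (D1 A1 u) x + D2 A2 (D2 A2 u) x) = (hfun ε u x : ℂ) * u x) ∧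
  (∀ x, ε ^ 2 * pd2 (curv A1 A2) x = ((starRingEnd ℂ) (u x) * D1 A1 u x).im) ∧
  (∀ x, ε ^ 2 * pd1 (curv A1 A2) x = -((starRingEnd ℂ) (u x) * D2 A2 u x).im)

/-- The Yang--Mills--Higgs equations on an open set `U ⊆ ℝ²`. -/
def IsYMHOn (ε : ℝ) (u : ℝ × ℝ → ℂ) (A1 A2 : ℝ × ℝ → ℝ) (U : Set (ℝ × ℝ)) : Prop :=
  (∀ x ∈ U, -(D1 A1 (D1 A1 u) x + D2 A2 (D2 A2 u) x) = (hfun ε u x : ℂ) * u x) ∧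
  (∀ x ∈ U, ε ^ 2 * pd2 (curv A1 A2) x = ((starRingEnd ℂ) (u x) * D1 A1 u x).im) ∧
  (∀ x ∈ U, ε ^ 2 * pd1 (curv A1 A2) x = -((starRingEnd ℂ) (u x) * D2 A2 u x).im)

/-- Stability: nonnegative second variation of the energy along all smooth periodic
variations of the section and the connection. -/
def Stable (ε : ℝ) (u : ℝ × ℝ → ℂ) (A1 A2 : ℝ × ℝ → ℝ) : Prop :=
  ∀ v : ℝ × ℝ → ℂ, ∀ a1 a2 : ℝ × ℝ → ℝ,
    ContDiff ℝ (⊤ : ℕ∞) v → Periodic2 v → ContDiff ℝ (⊤ : ℕ∞) a1 → Periodic2 a1 →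
    ContDiff ℝ (⊤ : ℕ∞) a2 → Periodic2 a2 →
    0 ≤ iteratedDeriv 2 (fun t : ℝ =>
      energy ε (fun x => u x + t • v x)
        (fun x => A1 x + t * a1 x) (fun x => A2 x + t * a2 x)) 0

/-- The first Jacobi operator `J¹` of the Yang--Mills--Higgs energy. -/
def J1 (ε : ℝ) (u : ℝ × ℝ → ℂ) (A1 A2 : ℝ × ℝ → ℝ)
    (v : ℝ × ℝ → ℂ) (a1 a2 : ℝ × ℝ → ℝ) (x : ℝ × ℝ) : ℂ :=
  -(D1 A1 (D1 A1 v) x + D2 A2 (D2 A2 v) x)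
    + 2 * Complex.I * ((a1 x : ℂ) * D1 A1 u x + (a2 x : ℂ) * D2 A2 u x)
    + Complex.I * ((pd1 a1 x + pd2 a2 x : ℝ) : ℂ) * u x
    + (((‖u x‖ ^ 2 - 1) / (2 * ε ^ 2) : ℝ) : ℂ) * v x
    + (((u x * (starRingEnd ℂ) (v x)).re / ε ^ 2 : ℝ) : ℂ) * u x

/-! With `D± = D₁ ± iD₂`, the commutator `[D₁, D₂] = -iF` gives the Weitzenböck identities
`D₋D₊ = Δ_A + F` and `D₊D₋ = Δ_A - F`. The first one turns the equation for `u` into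
`D₋σ₊ = φu` with `φ = F - h`, and the other two equations say `(∂₁ + i∂₂)φ = ūσ₊/ε²`. Applying
`D₊` to `D₋σ₊ = φu` therefore gives `Δ_A σ₊ = (2F - h + |u|²/ε²)σ₊`. The same formula for the
gradient of `φ` shows that the test pair satisfies `div a = Im(ūv)/ε²`, under which the last terms
of `J¹` combine to `|u|²v/ε²` and cancel against the corresponding term of `Δ_A v`. -/

open Topology ComplexConjugate

section CovariantDerivative

variable {E : Type*} [NormedAddCommGroup E] [NormedSpace ℝ E]

/-- The covariant derivative `∂_w f - iAf` of a complex function along a fixed vector `w`, where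
the real function `A` is the `w`-component of the connection form. It specialises to `D1` and `D2`
for the two coordinate vectors of the plane. -/
def covDeriv (w : E) (A : E → ℝ) (f : E → ℂ) (x : E) : ℂ :=
  fderiv ℝ f x w - I * A x * f x

variable {w z x : E} {A B : E → ℝ} {f g : E → ℂ}

theorem contDiffAt_covDeriv {m n : WithTop ℕ∞} (hA : ContDiffAt ℝ m A x)
    (hf : ContDiffAt ℝ n f x) (hmn : m + 1 ≤ n) : ContDiffAt ℝ m (covDeriv w A f) x :=
  ((hf.fderiv_right hmn).clm_apply contDiffAt_const).sub
    ((contDiffAt_const.mul (ofRealCLM.contDiff.contDiffAt.comp x hA)).mul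
      (hf.of_le (le_self_add.trans hmn)))

theorem covDeriv_congr (hfg : f =ᶠ[𝓝 x] g) : covDeriv w A f x = covDeriv w A g x := by
  simp only [covDeriv, hfg.fderiv_eq, hfg.eq_of_nhds]

theorem covDeriv_const_mul (c : ℂ) (hf : DifferentiableAt ℝ f x) :
    covDeriv w A (fun y => c * f y) x = c * covDeriv w A f x := by
  simp only [covDeriv, fderiv_const_mul hf, smul_apply, smul_eq_mul]
  ring

theorem covDeriv_add_const_mul (c : ℂ) (hf : DifferentiableAt ℝ f x)
    (hg : DifferentiableAt ℝ g x) :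
    covDeriv w A (fun y => f y + c * g y) x = covDeriv w A f x + c * covDeriv w A g x := by
  rw [← covDeriv_const_mul c hg]
  simp only [covDeriv, fderiv_fun_add hf (hg.const_mul c), add_apply]
  ring

theorem covDeriv_smul {φ : E → ℝ} (hφ : DifferentiableAt ℝ φ x) (hf : DifferentiableAt ℝ f x) :
    covDeriv w A (fun y => φ y • f y) x = fderiv ℝ φ x w • f x + φ x • covDeriv w A f x := by
  rw [covDeriv, covDeriv, fderiv_fun_smul hφ hf]
  simp only [add_apply, smul_apply, ContinuousLinearMap.smulRight_apply, real_smul]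
  ring

theorem covDeriv_covDeriv_const_mul (c : ℂ) (hA : ContDiffAt ℝ 1 A x) (hf : ContDiffAt ℝ 2 f x) :
    covDeriv w A (covDeriv w A fun y => c * f y) x = c * covDeriv w A (covDeriv w A f) x := by
  have inner : covDeriv w A (fun y => c * f y) =ᶠ[𝓝 x] fun y => c * covDeriv w A f y := by
    filter_upwards [hf.eventually (by simp)] with y hy
    exact covDeriv_const_mul c (hy.differentiableAt two_ne_zero)
  rw [covDeriv_congr inner, covDeriv_const_mul c]
  exact (contDiffAt_covDeriv hA hf one_add_one_eq_two.le).differentiableAt one_ne_zero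

theorem covDeriv_covDeriv (hB : DifferentiableAt ℝ B x) (hf : ContDiffAt ℝ 2 f x) :
    covDeriv w A (covDeriv z B f) x =
      fderiv ℝ (fderiv ℝ f) x w z - I * (fderiv ℝ B x w * f x + B x * fderiv ℝ f x w)
        - I * A x * covDeriv z B f x := by
  have df : DifferentiableAt ℝ f x := hf.differentiableAt two_ne_zero
  have ddf : DifferentiableAt ℝ (fderiv ℝ f) x :=
    (hf.fderiv_right one_add_one_eq_two.le).differentiableAt one_ne_zero
  have dcov : HasFDerivAt (fun y => fderiv ℝ f y z - I * (B y • f y)) _ x :=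
    (ddf.hasFDerivAt.clm_apply (hasFDerivAt_const z x)).sub
      ((hB.hasFDerivAt.smul df.hasFDerivAt).const_mul I)
  have covDeriv_eq : covDeriv z B f = fun y => fderiv ℝ f y z - I * (B y • f y) := by
    funext y
    simp only [covDeriv, real_smul, mul_assoc]
  rw [covDeriv, covDeriv_eq, dcov.fderiv]
  simp only [ContinuousLinearMap.comp_zero, ContinuousLinearMap.flip_apply,
    ContinuousLinearMap.smulRight_apply, sub_apply, add_apply, smul_apply, zero_add, real_smul,
    smul_eq_mul]
  ring

theorem covDeriv_commutator (hA : DifferentiableAt ℝ A x) (hB : DifferentiableAt ℝ B x)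
    (hf : ContDiffAt ℝ 2 f x) :
    covDeriv w A (covDeriv z B f) x - covDeriv z B (covDeriv w A f) x =
      -I * (fderiv ℝ B x w - fderiv ℝ A x z : ℝ) * f x := by
  have symm : fderiv ℝ (fderiv ℝ f) x w z = fderiv ℝ (fderiv ℝ f) x z w :=
    hf.isSymmSndFDerivAt (by simp) w z
  rw [covDeriv_covDeriv hB hf, covDeriv_covDeriv hA hf, symm]
  simp only [covDeriv]
  push_cast
  ring

theorem covDeriv_weitzenbock {c : ℂ} (hc : c * c = -1) (hA : ContDiffAt ℝ 1 A x)
    (hB : ContDiffAt ℝ 1 B x) (hf : ContDiffAt ℝ 2 f x) :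
    covDeriv w A (fun y => covDeriv w A f y + c * covDeriv z B f y) x
        - c * covDeriv z B (fun y => covDeriv w A f y + c * covDeriv z B f y) x =
      covDeriv w A (covDeriv w A f) x + covDeriv z B (covDeriv z B f) x
        - I * c * (fderiv ℝ B x w - fderiv ℝ A x z : ℝ) * f x := by
  have comm := covDeriv_commutator (w := w) (z := z) (hA.differentiableAt one_ne_zero)
    (hB.differentiableAt one_ne_zero) hf
  have dw : DifferentiableAt ℝ (covDeriv w A f) x :=
    (contDiffAt_covDeriv hA hf one_add_one_eq_two.le).differentiableAt one_ne_zero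
  have dz : DifferentiableAt ℝ (covDeriv z B f) x :=
    (contDiffAt_covDeriv hB hf one_add_one_eq_two.le).differentiableAt one_ne_zero
  rw [covDeriv_add_const_mul c dw dz, covDeriv_add_const_mul c dw dz]
  linear_combination c * comm - covDeriv z B (covDeriv z B f) x * hc

theorem fderiv_norm_sq_eq_re_conj_mul_covDeriv (A : E → ℝ) (hf : DifferentiableAt ℝ f x) :
    fderiv ℝ (fun y => ‖f y‖ ^ 2) x w = 2 * (conj (f x) * covDeriv w A f x).re := by
  have dnorm : HasFDerivAt (fun y => ‖f y‖ ^ 2) _ x := hf.hasFDerivAt.norm_sq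
  have connection_term : (conj (f x) * (I * A x * f x)).re = 0 := by
    rw [show conj (f x) * (I * A x * f x) = I * A x * (conj (f x) * f x) by ring, conj_mul']
    simp [← ofReal_pow]
  rw [dnorm.fderiv, covDeriv, mul_sub, sub_re, connection_term, sub_zero]
  simp only [smul_apply, ContinuousLinearMap.comp_apply, coe_innerSL_apply, Complex.inner,
    nsmul_eq_mul, Nat.cast_ofNat, mul_comm]

end CovariantDerivative

section Plane

variable {ε : ℝ} {u v f g : ℝ × ℝ → ℂ} {A1 A2 a1 a2 φ : ℝ × ℝ → ℝ} {x : ℝ × ℝ}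

theorem D1_eq_covDeriv : D1 = covDeriv (1, 0) := rfl

theorem D2_eq_covDeriv : D2 = covDeriv (0, 1) := rfl

/-- The connection Laplacian `Δ_A = D₁D₁ + D₂D₂`, with the analyst's sign. -/
def covLaplacian (A1 A2 : ℝ × ℝ → ℝ) (f : ℝ × ℝ → ℂ) (x : ℝ × ℝ) : ℂ :=
  D1 A1 (D1 A1 f) x + D2 A2 (D2 A2 f) x

/-- The function `φ = F - h`, which vanishes identically for solutions of the vortex equations. -/
def vortexDefect (ε : ℝ) (u : ℝ × ℝ → ℂ) (A1 A2 : ℝ × ℝ → ℝ) (x : ℝ × ℝ) : ℝ :=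
  curv A1 A2 x - hfun ε u x

theorem covLaplacian_const_mul (c : ℂ) (hA1 : ContDiffAt ℝ 1 A1 x) (hA2 : ContDiffAt ℝ 1 A2 x)
    (hf : ContDiffAt ℝ 2 f x) :
    covLaplacian A1 A2 (fun y => c * f y) x = c * covLaplacian A1 A2 f x := by
  simp only [covLaplacian, D1_eq_covDeriv, D2_eq_covDeriv, covDeriv_covDeriv_const_mul c hA1 hf,
    covDeriv_covDeriv_const_mul c hA2 hf, mul_add]

theorem sigP_congr (hfg : f =ᶠ[𝓝 x] g) : sigP f A1 A2 x = sigP g A1 A2 x := by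
  simp only [sigP, D1_eq_covDeriv, D2_eq_covDeriv, covDeriv_congr hfg]

theorem sigP_smul (hφ : DifferentiableAt ℝ φ x) (hf : DifferentiableAt ℝ f x) :
    sigP (fun y => φ y • f y) A1 A2 x =
      (pd1 φ x + I * pd2 φ x) * f x + φ x * sigP f A1 A2 x := by
  simp only [sigP, D1_eq_covDeriv, D2_eq_covDeriv]
  rw [covDeriv_smul hφ hf, covDeriv_smul hφ hf]
  simp only [pd1, pd2, real_smul]
  ring

theorem contDiffAt_sigP {m n : WithTop ℕ∞} (hA1 : ContDiffAt ℝ m A1 x)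
    (hA2 : ContDiffAt ℝ m A2 x) (hf : ContDiffAt ℝ n f x) (hmn : m + 1 ≤ n) :
    ContDiffAt ℝ m (sigP f A1 A2) x :=
  (contDiffAt_covDeriv hA1 hf hmn).add (contDiffAt_const.mul (contDiffAt_covDeriv hA2 hf hmn))

theorem sigM_sigP (hA1 : ContDiffAt ℝ 1 A1 x) (hA2 : ContDiffAt ℝ 1 A2 x)
    (hf : ContDiffAt ℝ 2 f x) :
    sigM (sigP f A1 A2) A1 A2 x = covLaplacian A1 A2 f x + curv A1 A2 x * f x := by
  have weitzenbock : sigM (sigP f A1 A2) A1 A2 x =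
      covLaplacian A1 A2 f x - I * I * curv A1 A2 x * f x :=
    covDeriv_weitzenbock I_mul_I hA1 hA2 hf
  linear_combination weitzenbock - curv A1 A2 x * f x * I_mul_I

theorem sigP_sigM (hA1 : ContDiffAt ℝ 1 A1 x) (hA2 : ContDiffAt ℝ 1 A2 x)
    (hf : ContDiffAt ℝ 2 f x) :
    sigP (sigM f A1 A2) A1 A2 x = covLaplacian A1 A2 f x - curv A1 A2 x * f x := by
  have sigM_eq : sigM f A1 A2 = fun y => D1 A1 f y + -I * D2 A2 f y := by
    funext y
    rw [sigM, neg_mul, sub_eq_add_neg]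
  have weitzenbock :
      D1 A1 (sigM f A1 A2) x - -I * D2 A2 (sigM f A1 A2) x =
        covLaplacian A1 A2 f x - I * -I * curv A1 A2 x * f x := by
    rw [sigM_eq]
    exact covDeriv_weitzenbock (by simp) hA1 hA2 hf
  rw [sigP]
  linear_combination weitzenbock + curv A1 A2 x * f x * I_mul_I

theorem differentiableAt_curv (hA1 : ContDiffAt ℝ 2 A1 x) (hA2 : ContDiffAt ℝ 2 A2 x) :
    DifferentiableAt ℝ (curv A1 A2) x := by
  have dfderiv {A : ℝ × ℝ → ℝ} (hA : ContDiffAt ℝ 2 A x) : DifferentiableAt ℝ (fderiv ℝ A) x :=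
    (hA.fderiv_right one_add_one_eq_two.le).differentiableAt one_ne_zero
  exact ((dfderiv hA2).clm_apply (differentiableAt_const _)).sub
    ((dfderiv hA1).clm_apply (differentiableAt_const _))

theorem differentiableAt_hfun (hu : DifferentiableAt ℝ u x) : DifferentiableAt ℝ (hfun ε u) x :=
  ((hu.norm_sq ℝ).const_sub 1).mul_const (2 * ε ^ 2)⁻¹

theorem differentiableAt_vortexDefect (hu : DifferentiableAt ℝ u x) (hA1 : ContDiffAt ℝ 2 A1 x)
    (hA2 : ContDiffAt ℝ 2 A2 x) : DifferentiableAt ℝ (vortexDefect ε u A1 A2) x :=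
  (differentiableAt_curv hA1 hA2).sub (differentiableAt_hfun hu)

theorem fderiv_hfun (w : ℝ × ℝ) (A : ℝ × ℝ → ℝ) (hu : DifferentiableAt ℝ u x) :
    fderiv ℝ (hfun ε u) x w = -(conj (u x) * covDeriv w A u x).re / ε ^ 2 := by
  have dh : HasFDerivAt (hfun ε u) _ x :=
    ((hu.norm_sq ℝ).hasFDerivAt.const_sub 1).mul_const (2 * ε ^ 2)⁻¹
  rw [dh.fderiv, smul_apply, neg_apply, fderiv_norm_sq_eq_re_conj_mul_covDeriv A hu, smul_eq_mul]
  ring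

theorem J1_eq_of_div_eq (hdiv : pd1 a1 x + pd2 a2 x = (conj (u x) * v x).im / ε ^ 2) :
    J1 ε u A1 A2 v a1 a2 x =
      -covLaplacian A1 A2 v x + 2 * I * (a1 x * D1 A1 u x + a2 x * D2 A2 u x)
        + (‖u x‖ ^ 2 / ε ^ 2 - hfun ε u x) * v x := by
  have potential : (‖u x‖ ^ 2 - 1) / (2 * ε ^ 2) = -hfun ε u x := by
    rw [hfun]
    ring
  have re_symm : (u x * conj (v x)).re = (conj (u x) * v x).re := by
    simp
  have cartesian : ((conj (u x) * v x).re + (conj (u x) * v x).im * I : ℂ) = conj (u x) * v x :=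
    re_add_im _
  rw [J1, hdiv, potential, re_symm, covLaplacian]
  push_cast
  linear_combination u x / ε ^ 2 * cartesian + v x / ε ^ 2 * conj_mul' (u x)

namespace IsYMHOn

variable {U : Set (ℝ × ℝ)}

theorem sigM_sigP_eq_smul (hYMH : IsYMHOn ε u A1 A2 U) (hx : x ∈ U) (hu : ContDiffAt ℝ 2 u x)
    (hA1 : ContDiffAt ℝ 1 A1 x) (hA2 : ContDiffAt ℝ 1 A2 x) :
    sigM (sigP u A1 A2) A1 A2 x = vortexDefect ε u A1 A2 x • u x := by
  have higgs : -covLaplacian A1 A2 u x = hfun ε u x * u x := hYMH.1 x hx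
  rw [sigM_sigP hA1 hA2 hu, vortexDefect, real_smul]
  push_cast
  linear_combination -higgs

theorem pd1_add_I_mul_pd2_vortexDefect (hYMH : IsYMHOn ε u A1 A2 U) (hε : ε ≠ 0) (hx : x ∈ U)
    (hu : DifferentiableAt ℝ u x) (hA1 : ContDiffAt ℝ 2 A1 x) (hA2 : ContDiffAt ℝ 2 A2 x) :
    (pd1 (vortexDefect ε u A1 A2) x + I * pd2 (vortexDefect ε u A1 A2) x : ℂ) =
      conj (u x) * sigP u A1 A2 x / ε ^ 2 := by
  have hε2 : ε ^ 2 ≠ 0 := pow_ne_zero 2 hε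
  have dφ : fderiv ℝ (vortexDefect ε u A1 A2) x =
      fderiv ℝ (curv A1 A2) x - fderiv ℝ (hfun ε u) x :=
    fderiv_fun_sub (differentiableAt_curv hA1 hA2) (differentiableAt_hfun hu)
  have pd1_φ : pd1 (vortexDefect ε u A1 A2) x = (conj (u x) * sigP u A1 A2 x).re / ε ^ 2 := by
    have pd1_curv := eq_div_of_mul_eq hε2 ((mul_comm _ _).trans (hYMH.2.2 x hx))
    rw [pd1] at pd1_curv ⊢
    rw [dφ, sub_apply, pd1_curv, fderiv_hfun _ A1 hu, ← D1_eq_covDeriv, sigP, mul_add,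
      mul_left_comm, add_re, I_mul_re]
    ring
  have pd2_φ : pd2 (vortexDefect ε u A1 A2) x = (conj (u x) * sigP u A1 A2 x).im / ε ^ 2 := by
    have pd2_curv := eq_div_of_mul_eq hε2 ((mul_comm _ _).trans (hYMH.2.1 x hx))
    rw [pd2] at pd2_curv ⊢
    rw [dφ, sub_apply, pd2_curv, fderiv_hfun _ A2 hu, ← D2_eq_covDeriv, sigP, mul_add,
      mul_left_comm, add_im, I_mul_im]
    ring
  rw [pd1_φ, pd2_φ]
  push_cast
  linear_combination re_add_im (conj (u x) * sigP u A1 A2 x) / (ε : ℂ) ^ 2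

theorem covLaplacian_sigP (hYMH : IsYMHOn ε u A1 A2 U) (hε : ε ≠ 0) (hU : U ∈ 𝓝 x)
    (hu : ContDiffAt ℝ 3 u x) (hA1 : ContDiffAt ℝ 2 A1 x) (hA2 : ContDiffAt ℝ 2 A2 x) :
    covLaplacian A1 A2 (sigP u A1 A2) x =
      (2 * curv A1 A2 x - hfun ε u x + ‖u x‖ ^ 2 / ε ^ 2) * sigP u A1 A2 x := by
  have hA1' : ContDiffAt ℝ 1 A1 x := hA1.of_le one_le_two
  have hA2' : ContDiffAt ℝ 1 A2 x := hA2.of_le one_le_two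
  have hu' : ContDiffAt ℝ 2 u x := hu.of_le (by norm_num)
  have du : DifferentiableAt ℝ u x := hu.differentiableAt three_ne_zero
  have first_order :
      sigM (sigP u A1 A2) A1 A2 =ᶠ[𝓝 x] fun y => vortexDefect ε u A1 A2 y • u y := by
    filter_upwards [hU, hu'.eventually (by simp), hA1'.eventually (by simp),
      hA2'.eventually (by simp)] with y hyU huy hA1y hA2y
    exact hYMH.sigM_sigP_eq_smul hyU huy hA1y hA2y
  have laplacian := sigP_sigM hA1' hA2' (contDiffAt_sigP hA1 hA2 hu two_add_one_eq_three.le)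
  rw [sigP_congr first_order, sigP_smul (differentiableAt_vortexDefect du hA1 hA2) du,
    hYMH.pd1_add_I_mul_pd2_vortexDefect hε (mem_of_mem_nhds hU) du hA1 hA2,
    vortexDefect] at laplacian
  push_cast at laplacian
  linear_combination -laplacian + sigP u A1 A2 x / ε ^ 2 * conj_mul' (u x)

theorem pd1_add_pd2_vortexDefect_mul (hYMH : IsYMHOn ε u A1 A2 U) (hε : ε ≠ 0) (hx : x ∈ U)
    (hu : DifferentiableAt ℝ u x) (hA1 : ContDiffAt ℝ 2 A1 x) (hA2 : ContDiffAt ℝ 2 A2 x)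
    (X1 X2 : ℝ) :
    pd1 (fun y => vortexDefect ε u A1 A2 y * -X2) x
        + pd2 (fun y => vortexDefect ε u A1 A2 y * X1) x =
      (conj (u x) * ((X1 - I * X2) * sigP u A1 A2 x)).im / ε ^ 2 := by
  have dφ := differentiableAt_vortexDefect (ε := ε) hu hA1 hA2
  have rotated : conj (u x) * ((X1 - I * X2) * sigP u A1 A2 x) / (ε ^ 2 : ℝ) =
      (X1 - I * X2) *
        (pd1 (vortexDefect ε u A1 A2) x + I * pd2 (vortexDefect ε u A1 A2) x) := by
    rw [hYMH.pd1_add_I_mul_pd2_vortexDefect hε hx hu hA1 hA2]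
    push_cast
    ring
  rw [← div_ofReal_im, rotated]
  simp only [pd1, pd2, fderiv_mul_const dφ, smul_apply, smul_eq_mul, mul_im, sub_re, sub_im,
    add_re, add_im, mul_re, I_re, I_im, ofReal_re, ofReal_im]
  ring

end IsYMHOn

end Plane

theorem J1_on_test_pair_general {ε : ℝ} {u : ℝ × ℝ → ℂ} {A1 A2 : ℝ × ℝ → ℝ} {U : Set (ℝ × ℝ)}
    {x : ℝ × ℝ} (hε : ε ≠ 0) (hU : U ∈ 𝓝 x) (hu : ContDiffAt ℝ 3 u x)
    (hA1 : ContDiffAt ℝ 2 A1 x) (hA2 : ContDiffAt ℝ 2 A2 x) (hYMH : IsYMHOn ε u A1 A2 U)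
    (X1 X2 : ℝ) :
    J1 ε u A1 A2 (fun y => (X1 - I * X2) * sigP u A1 A2 y)
        (fun y => (curv A1 A2 y - hfun ε u y) * -X2) (fun y => (curv A1 A2 y - hfun ε u y) * X1) x =
      -2 * curv A1 A2 x * (X1 * D1 A1 u x + X2 * D2 A2 u x)
        + 2 * hfun ε u x * I * (X2 * D1 A1 u x - X1 * D2 A2 u x) := by
  have div_eq := hYMH.pd1_add_pd2_vortexDefect_mul hε (mem_of_mem_nhds hU)
    (hu.differentiableAt three_ne_zero) hA1 hA2 X1 X2
  have hσ : ContDiffAt ℝ 2 (sigP u A1 A2) x :=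
    contDiffAt_sigP hA1 hA2 hu two_add_one_eq_three.le
  rw [J1_eq_of_div_eq div_eq,
    covLaplacian_const_mul _ (hA1.of_le one_le_two) (hA2.of_le one_le_two) hσ,
    hYMH.covLaplacian_sigP hε hU hu hA1 hA2, sigP]
  push_cast
  linear_combination (2 * curv A1 A2 x * X2 * D2 A2 u x) * I_mul_I

/-- First Jacobi operator applied to the test pair built from `σ₊` and `φ = (F − h)`
contracted with a constant Killing field (Lemma 4.1(a), flat torus case). -/
theorem J1_on_test_pair
    (ε : ℝ) (hε : 0 < ε) (U : Set (ℝ × ℝ)) (hU : IsOpen U)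
    (u : ℝ × ℝ → ℂ) (A1 A2 : ℝ × ℝ → ℝ)
    (hu : ContDiffOn ℝ (⊤ : ℕ∞) u U) (hA1 : ContDiffOn ℝ (⊤ : ℕ∞) A1 U) (hA2 : ContDiffOn ℝ (⊤ : ℕ∞) A2 U)
    (hYMH : IsYMHOn ε u A1 A2 U)
    (X1 X2 : ℝ)
    (v : ℝ × ℝ → ℂ) (a1 a2 : ℝ × ℝ → ℝ)
    (hv : v = fun y => ((X1 : ℂ) - Complex.I * (X2 : ℂ)) * sigP u A1 A2 y)
    (ha1 : a1 = fun y => (curv A1 A2 y - hfun ε u y) * (-X2))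
    (ha2 : a2 = fun y => (curv A1 A2 y - hfun ε u y) * X1) :
    ∀ x ∈ U,
      J1 ε u A1 A2 v a1 a2 x =
        -2 * (curv A1 A2 x : ℂ) * ((X1 : ℂ) * D1 A1 u x + (X2 : ℂ) * D2 A2 u x)
          + 2 * (hfun ε u x : ℂ) * Complex.I
              * ((X2 : ℂ) * D1 A1 u x - (X1 : ℂ) * D2 A2 u x) := by
  intro x hx
  have hUx : U ∈ 𝓝 x := hU.mem_nhds hx
  subst hv ha1 ha2
  exact J1_on_test_pair_general hε.ne' hUx (contDiffAt_infty.1 (hu.contDiffAt hUx) 3)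
    (contDiffAt_infty.1 (hA1.contDiffAt hUx) 2) (contDiffAt_infty.1 (hA2.contDiffAt hUx) 2)
    hYMH X1 X2
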